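/- Let G be a simple graph on n vertices. Suppose α and α' are double-flip equivalent acyclic orientations of G, u is a source of α, and u' is a source of α'. Let ᾱ be obtained from α by reversing all edges incident to u (flipping the source u into a sink), and let ᾱ' be obtained from α' by reversing all edges incident to u'. Then ᾱ and ᾱ' are double-flip equivalent. In particular, the map Φ on double-flip equivalence classes of acyclic orientations of G sending the class of α to the class of ᾱ is well-defined. -/

import Mathlib

/-- `o` is an orientation of the simple graph `G`: it directs each edge of `G` in
exactly one direction, and directs nothing else. -/
def IsOrientation {V : Type*} (G : SimpleGraph V) (o : V → V → Prop) : Prop :=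
  (∀ a b, o a b → G.Adj a b) ∧ ∀ a b, G.Adj a b → (o a b ↔ ¬ o b a)

/-- `DoubleFlip G o o'` : the orientation `o'` is obtained from `o` by a double flip,
i.e., there are a source `u` of `o` (a vertex of in-degree `0`) and a sink `v` of `o`
(a vertex of out-degree `0`), not adjacent in `G`, such that `o'` reverses exactly the
edges of `o` incident to `u` or `v`. -/
def DoubleFlip {V : Type*} (G : SimpleGraph V) (o o' : V → V → Prop) : Prop :=
  ∃ u v : V, u ≠ v ∧ ¬ G.Adj u v ∧ (∀ w, ¬ o w u) ∧ (∀ w, ¬ o v w) ∧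
    ∀ a b, o' a b ↔
      (((a = u ∨ b = u ∨ a = v ∨ b = v) ∧ o b a) ∨
        (¬ (a = u ∨ b = u ∨ a = v ∨ b = v) ∧ o a b))

/-- `SingleFlip o o'` : the orientation `o'` is obtained from `o` by flipping a single
source or sink `u`, i.e., reversing exactly the edges of `o` incident to `u`. -/
def SingleFlip {V : Type*} (o o' : V → V → Prop) : Prop :=
  ∃ u : V, ((∀ w, ¬ o w u) ∨ (∀ w, ¬ o u w)) ∧
    ∀ a b, o' a b ↔
      (((a = u ∨ b = u) ∧ o b a) ∨ (¬ (a = u ∨ b = u) ∧ o a b))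

/-!
Flips at vertices are commuting involutions, and a double flip is the composite of a flip at a
source and a flip at a sink. Hence, for two sources `u` and `v` of one orientation `o`, a double
flip at the source `v` and the sink `u` turns `flipAt o u` into `flipAt o v`, so the choice of
source does not matter. If a double flip at the source `u` and the sink `v` turns `o` into `q`, then
`v` is a source of `q` and `flipAt q v = flipAt o u`, so the choice of representative does not
matter either.
-/

section Flip

variable {V : Type*} {G : SimpleGraph V} {o o' p : V → V → Prop} {u v : V}

/-- `u` is a source of the orientation `o`: no edge is directed into `u`. -/
def IsSource (o : V → V → Prop) (u : V) : Prop :=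
  ∀ w, ¬ o w u

/-- `v` is a sink of the orientation `o`: no edge is directed out of `v`. -/
def IsSink (o : V → V → Prop) (v : V) : Prop :=
  ∀ w, ¬ o v w

/-- The flip of `o` at `u`, which reverses exactly the edges incident to `u`. It is defined for an
arbitrary vertex `u`, not only for a source or a sink. -/
def flipAt (o : V → V → Prop) (u : V) : V → V → Prop :=
  fun a b => ((a = u ∨ b = u) ∧ o b a) ∨ (¬ (a = u ∨ b = u) ∧ o a b)

theorem eq_flipAt_iff : p = flipAt o u ↔
    ∀ a b, p a b ↔ (((a = u ∨ b = u) ∧ o b a) ∨ (¬ (a = u ∨ b = u) ∧ o a b)) := by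
  simp only [funext_iff, eq_iff_iff, flipAt]

theorem flipAt_flipAt_self (o : V → V → Prop) (u : V) : flipAt (flipAt o u) u = o := by
  ext a b
  grind [flipAt]

theorem flipAt_comm (o : V → V → Prop) (u v : V) :
    flipAt (flipAt o u) v = flipAt (flipAt o v) u := by
  ext a b
  grind [flipAt]

theorem flipAt_flipAt_iff (huv : u ≠ v) (h : ¬ o u v) (h' : ¬ o v u) (a b : V) :
    flipAt (flipAt o u) v a b ↔
      (((a = u ∨ b = u ∨ a = v ∨ b = v) ∧ o b a) ∨
        (¬ (a = u ∨ b = u ∨ a = v ∨ b = v) ∧ o a b)) := by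
  grind [flipAt]

theorem IsSource.isSink_flipAt (hu : IsSource o u) : IsSink (flipAt o u) u := by
  grind [IsSource, IsSink, flipAt]

theorem IsSink.isSource_flipAt (hv : IsSink o v) : IsSource (flipAt o v) v := by
  grind [IsSource, IsSink, flipAt]

theorem IsSource.flipAt_of_not_rel (hv : IsSource o v) (huv : u ≠ v) (h : ¬ o v u) :
    IsSource (flipAt o u) v := by
  grind [IsSource, flipAt]

theorem IsSink.flipAt_of_not_rel (hv : IsSink o v) (huv : u ≠ v) (h : ¬ o u v) :
    IsSink (flipAt o u) v := by
  grind [IsSink, flipAt]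

namespace IsOrientation

protected theorem flipAt (ho : IsOrientation G o) (u : V) :
    IsOrientation G (flipAt o u) := by
  obtain ⟨adj_of_rel, rel_iff⟩ := ho
  refine ⟨fun a b hab => ?_, fun a b hab => ?_⟩
  · rcases hab with ⟨-, hba⟩ | ⟨-, hab⟩
    · exact (adj_of_rel b a hba).symm
    · exact adj_of_rel a b hab
  · have := rel_iff a b hab
    grind [flipAt]

theorem not_adj_of_isSource (ho : IsOrientation G o) (hu : IsSource o u) (hv : IsSource o v) :
    ¬ G.Adj u v :=
  fun h => hv u ((ho.2 u v h).2 (hu v))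

theorem doubleFlip_iff (ho : IsOrientation G o) :
    DoubleFlip G o o' ↔ ∃ u v, u ≠ v ∧ ¬ G.Adj u v ∧ IsSource o u ∧ IsSink o v ∧
      o' = flipAt (flipAt o u) v := by
  refine exists₂_congr fun u v => ?_
  refine and_congr_right fun huv => and_congr_right fun hadj => and_congr_right fun hu =>
    and_congr_right fun _ => ?_
  have h : ¬ o u v := fun h => hadj (ho.1 u v h)
  simp only [funext_iff, eq_iff_iff, flipAt_flipAt_iff huv h (hu v)]

theorem doubleFlip_flipAt (ho : IsOrientation G o) (hu : IsSource o u) (hv : IsSource o v)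
    (huv : u ≠ v) : DoubleFlip G (flipAt o u) (flipAt o v) := by
  refine (ho.flipAt u).doubleFlip_iff.2 ⟨v, u, huv.symm, ho.not_adj_of_isSource hv hu,
    hv.flipAt_of_not_rel huv (hu v), hu.isSink_flipAt, ?_⟩
  rw [flipAt_comm, flipAt_flipAt_self]

theorem reflTransGen_doubleFlip_flipAt (ho : IsOrientation G o) (hu : IsSource o u)
    (hv : IsSource o v) :
    Relation.ReflTransGen (DoubleFlip G) (flipAt o u) (flipAt o v) := by
  obtain rfl | huv := eq_or_ne u v
  · exact .refl
  · exact .single (ho.doubleFlip_flipAt hu hv huv)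

theorem of_doubleFlip (ho : IsOrientation G o) (h : DoubleFlip G o o') : IsOrientation G o' := by
  obtain ⟨u, v, -, -, -, -, rfl⟩ := ho.doubleFlip_iff.1 h
  exact (ho.flipAt u).flipAt v

theorem exists_flipAt_eq_of_doubleFlip (ho : IsOrientation G o) (h : DoubleFlip G o o') :
    ∃ u v, IsSource o u ∧ IsSource o' v ∧ flipAt o u = flipAt o' v := by
  obtain ⟨u, v, huv, hadj, hu, hv, rfl⟩ := ho.doubleFlip_iff.1 h
  have hv' : IsSink (flipAt o u) v := hv.flipAt_of_not_rel huv fun h => hadj (ho.1 u v h)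
  exact ⟨u, v, hu, hv'.isSource_flipAt, (flipAt_flipAt_self _ v).symm⟩

end IsOrientation

theorem stmt10_general {u' : V} (ho : IsOrientation G o)
    (hequiv : Relation.ReflTransGen (DoubleFlip G) o o') (hu : IsSource o u)
    (hu' : IsSource o' u') :
    Relation.ReflTransGen (DoubleFlip G) (flipAt o u) (flipAt o' u') := by
  induction hequiv using Relation.ReflTransGen.head_induction_on generalizing u with
  | refl => exact ho.reflTransGen_doubleFlip_flipAt hu hu'
  | @head o q hoq _ ih =>
    obtain ⟨x, y, hx, hy, hxy⟩ := ho.exists_flipAt_eq_of_doubleFlip hoq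
    calc
      Relation.ReflTransGen (DoubleFlip G) (flipAt o u) (flipAt o x) :=
        ho.reflTransGen_doubleFlip_flipAt hu hx
      _ = flipAt q y := hxy
      Relation.ReflTransGen (DoubleFlip G) _ (flipAt o' u') := ih (ho.of_doubleFlip hoq) hy

end Flip

/-- Defant–Kravitz, Corollary 4.4: if `o ≈ o'` are double-flip equivalent acyclic
orientations of a graph `G` on finitely many vertices, `u` is a source of `o`, `u'`
is a source of `o'`, and `p` (resp. `p'`) is obtained from `o` (resp. `o'`) by
flipping the source `u` (resp. `u'`) into a sink, then `p ≈ p'`.  In particular,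
flipping a source into a sink induces a well-defined map `Φ` on double-flip
equivalence classes of acyclic orientations of `G`. -/
theorem stmt10 {V : Type*} [Fintype V] (G : SimpleGraph V)
    (o o' : V → V → Prop)
    (ho : IsOrientation G o) (hoa : ∀ v, ¬ Relation.TransGen o v v)
    (ho' : IsOrientation G o') (ho'a : ∀ v, ¬ Relation.TransGen o' v v)
    (hequiv : Relation.ReflTransGen (DoubleFlip G) o o')
    (u u' : V) (hu : ∀ w, ¬ o w u) (hu' : ∀ w, ¬ o' w u')
    (p p' : V → V → Prop)
    (hp : ∀ a b, p a b ↔ (((a = u ∨ b = u) ∧ o b a) ∨ (¬ (a = u ∨ b = u) ∧ o a b)))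
    (hp' : ∀ a b, p' a b ↔
      (((a = u' ∨ b = u') ∧ o' b a) ∨ (¬ (a = u' ∨ b = u') ∧ o' a b))) :
    Relation.ReflTransGen (DoubleFlip G) p p' := by
  rw [eq_flipAt_iff.2 hp, eq_flipAt_iff.2 hp']
  exact stmt10_general ho hequiv hu hu'
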